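/- Suppose Q + KᵀRK ⪰ I and √γ·(A+BK) is stable with Lyapunov solution P = P_{K,γ}. Fix a constant c ≥ 1 and an integer H ≥ 4c, and define the finite-horizon value matrix P_H := Σ_{t=0}^{H−1} γ^t ((A+BK)^t)ᵀ (Q + KᵀRK) (A+BK)^t. Then tr(P_H) ≥ min( tr(P)/2, c ). -/

import Mathlib

open Matrix

/-- A real square matrix is stable if every complex eigenvalue has modulus `< 1`. -/
def IsStable {n : ℕ} (M : Matrix (Fin n) (Fin n) ℝ) : Prop :=
  ∀ μ ∈ spectrum ℂ (M.map Complex.ofReal), ‖μ‖ < 1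

/-- Euclidean operator norm of a real matrix. -/
noncomputable def opNorm {p q : ℕ} (M : Matrix (Fin p) (Fin q) ℝ) : ℝ :=
  ‖LinearMap.toContinuousLinearMap (Matrix.toEuclideanLin M)‖

/-- Euclidean norm of a vector in `ℝ^n`. -/
noncomputable def evnorm {n : ℕ} (x : Fin n → ℝ) : ℝ :=
  ‖(WithLp.equiv 2 (Fin n → ℝ)).symm x‖

/-- `P_{K,γ} = Σ_t γ^t ((A+BK)^t)ᵀ (Q + KᵀRK) (A+BK)^t`, the solution of the discounted
Lyapunov equation when `√γ (A+BK)` is stable. -/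
noncomputable def lyapP {d m : ℕ} (A : Matrix (Fin d) (Fin d) ℝ) (B : Matrix (Fin d) (Fin m) ℝ)
    (Q : Matrix (Fin d) (Fin d) ℝ) (R : Matrix (Fin m) (Fin m) ℝ)
    (K : Matrix (Fin m) (Fin d) ℝ) (γ : ℝ) : Matrix (Fin d) (Fin d) ℝ :=
  ∑' t : ℕ, γ ^ t • (((A + B * K) ^ t)ᵀ * (Q + Kᵀ * R * K) * (A + B * K) ^ t)

/-!
Write `‖M‖²_S = tr(Mᴴ S M)`. When `S ⪰ 1`, factoring `S = Lᴴ L` gives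
`‖M N‖²_S = ‖L M N‖² ≤ ‖L M‖² ‖N‖² ≤ ‖M‖²_S ‖N‖²_S` in Frobenius norms, so the stage costs
`f t = γ ^ t ‖X ^ t‖²_S` are submultiplicative in `t`. Either all the first `H` of them are at
least `ε`, and they sum to at least `ε H`; or `f s < ε` for some `s < H`, and then the tail
`∑ t, f (t + s) ≤ f s * ∑ t, f t` carries less than an `ε`-fraction of the infinite sum.
The theorem is the case `ε = 1 / 2`; the infinite sum converges because, by Gelfand's formula, the
powers of a stable matrix decay geometrically.
-/

section Submultiplicative

variable {f : ℕ → ℝ}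

lemma one_sub_mul_tsum_le_sum_range (hmul : ∀ s t, f (s + t) ≤ f s * f t) (hf : Summable f)
    (s : ℕ) : (1 - f s) * ∑' t, f t ≤ ∑ t ∈ Finset.range s, f t := by
  have htail : ∑' t, f (t + s) ≤ f s * ∑' t, f t := by
    rw [← tsum_mul_left]
    refine Summable.tsum_le_tsum (fun t ↦ ?_) ((summable_nat_add_iff s).mpr hf) (hf.mul_left _)
    simpa only [add_comm] using hmul s t
  linarith [hf.sum_add_tsum_nat_add s]

lemma min_one_sub_mul_tsum_le_sum_range (hf₀ : ∀ t, 0 ≤ f t) (hmul : ∀ s t, f (s + t) ≤ f s * f t)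
    (hf : Summable f) (ε : ℝ) (H : ℕ) :
    min ((1 - ε) * ∑' t, f t) (ε * H) ≤ ∑ t ∈ Finset.range H, f t := by
  by_cases! hlarge : ∀ t ∈ Finset.range H, ε ≤ f t
  · calc min ((1 - ε) * ∑' t, f t) (ε * H) ≤ ε * H := min_le_right _ _
      _ ≤ ∑ t ∈ Finset.range H, f t := by
        simpa [mul_comm] using Finset.card_nsmul_le_sum _ _ _ hlarge
  · obtain ⟨s, hsH, hsε⟩ := hlarge
    have hsub : Finset.range s ⊆ Finset.range H :=
      Finset.range_subset_range.mpr (Finset.mem_range.mp hsH).le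
    calc min ((1 - ε) * ∑' t, f t) (ε * H) ≤ (1 - ε) * ∑' t, f t := min_le_left _ _
      _ ≤ (1 - f s) * ∑' t, f t :=
        mul_le_mul_of_nonneg_right (sub_le_sub_left hsε.le 1) (tsum_nonneg hf₀)
      _ ≤ ∑ t ∈ Finset.range s, f t := one_sub_mul_tsum_le_sum_range hmul hf s
      _ ≤ ∑ t ∈ Finset.range H, f t :=
        Finset.sum_le_sum_of_subset_of_nonneg hsub fun t _ _ ↦ hf₀ t

end Submultiplicative

section WeightedFrobenius

open scoped ComplexOrder

variable {𝕜 n p q : Type*} [RCLike 𝕜]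

lemma posSemidef_of_sub_one [DecidableEq n] {S : Matrix n n 𝕜} (hS : (S - 1).PosSemidef) :
    S.PosSemidef := by
  simpa using hS.add PosSemidef.one

variable [Fintype n] [Fintype p] [Fintype q]

/-- The squared Frobenius norm `tr(Mᴴ S M)` of `M` weighted by `S`: for `M = X ^ t`, the
undiscounted stage cost at time `t`. For Hermitian `S` the trace is already real; the real part only
casts it to `ℝ`. -/
noncomputable def weightedFrobeniusSq (S : Matrix n n 𝕜) (M : Matrix n p 𝕜) : ℝ :=
  RCLike.re (Mᴴ * S * M).trace

open scoped Matrix.Norms.Frobenius in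
lemma re_trace_conjTranspose_mul_self (M : Matrix n p 𝕜) :
    RCLike.re (Mᴴ * M).trace = ‖M‖ ^ 2 := by
  rw [frobenius_norm_def, ← Real.sqrt_eq_rpow, Real.sq_sqrt (by positivity), Finset.sum_comm]
  simp only [trace, diag_apply, Matrix.mul_apply, conjTranspose_apply, map_sum, RCLike.star_def,
    RCLike.conj_mul, Real.rpow_two]
  norm_cast

lemma weightedFrobeniusSq_nonneg {S : Matrix n n 𝕜} (hS : S.PosSemidef) (M : Matrix n p 𝕜) :
    0 ≤ weightedFrobeniusSq S M :=
  (RCLike.nonneg_iff.mp (hS.conjTranspose_mul_mul_same M).trace_nonneg).1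

open scoped Matrix.Norms.Frobenius in
lemma weightedFrobeniusSq_conjTranspose_mul_self (L : Matrix q n 𝕜) (M : Matrix n p 𝕜) :
    weightedFrobeniusSq (Lᴴ * L) M = ‖L * M‖ ^ 2 := by
  rw [weightedFrobeniusSq, ← re_trace_conjTranspose_mul_self, conjTranspose_mul]
  simp only [Matrix.mul_assoc]

open scoped MatrixOrder Matrix.Norms.Frobenius in
lemma weightedFrobeniusSq_mul_le {S : Matrix n n 𝕜} (hS : S.PosSemidef) (M : Matrix n q 𝕜)
    (N : Matrix q p 𝕜) :
    weightedFrobeniusSq S (M * N) ≤ weightedFrobeniusSq S M * ‖N‖ ^ 2 := by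
  classical
  obtain ⟨L, rfl⟩ : ∃ L, S = Lᴴ * L := CStarAlgebra.nonneg_iff_eq_star_mul_self.mp hS.nonneg
  simp only [weightedFrobeniusSq_conjTranspose_mul_self, ← Matrix.mul_assoc, ← mul_pow]
  gcongr
  exact frobenius_norm_mul (L * M) N

variable [DecidableEq n]

open scoped Matrix.Norms.Frobenius in
lemma frobenius_norm_sq_le_weightedFrobeniusSq {S : Matrix n n 𝕜} (hS : (S - 1).PosSemidef)
    (M : Matrix n p 𝕜) : ‖M‖ ^ 2 ≤ weightedFrobeniusSq S M := by
  have hsplit : weightedFrobeniusSq S M = weightedFrobeniusSq (S - 1) M + ‖M‖ ^ 2 := by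
    simp [weightedFrobeniusSq, ← re_trace_conjTranspose_mul_self, Matrix.mul_sub, Matrix.sub_mul]
  linarith [weightedFrobeniusSq_nonneg hS M]

lemma weightedFrobeniusSq_mul_le_mul {S : Matrix n n 𝕜} (hS : (S - 1).PosSemidef)
    (M : Matrix n n 𝕜) (N : Matrix n p 𝕜) :
    weightedFrobeniusSq S (M * N) ≤ weightedFrobeniusSq S M * weightedFrobeniusSq S N := by
  have hS₀ := posSemidef_of_sub_one hS
  refine (weightedFrobeniusSq_mul_le hS₀ M N).trans ?_
  gcongr
  · exact weightedFrobeniusSq_nonneg hS₀ M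
  · exact frobenius_norm_sq_le_weightedFrobeniusSq hS N

theorem finite_horizon_trace_lower_bound_general {X S P : Matrix n n 𝕜} {γ : ℝ}
    (hS : (S - 1).PosSemidef) (hγ : 0 ≤ γ)
    (hP : HasSum (fun t : ℕ ↦ γ ^ t • ((X ^ t)ᴴ * S * X ^ t)) P) (ε : ℝ) (H : ℕ) :
    min ((1 - ε) * RCLike.re P.trace) (ε * H)
      ≤ RCLike.re (∑ t ∈ Finset.range H, γ ^ t • ((X ^ t)ᴴ * S * X ^ t)).trace := by
  let f (t : ℕ) : ℝ := γ ^ t * weightedFrobeniusSq S (X ^ t)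
  have htrace (t : ℕ) : RCLike.re (γ ^ t • ((X ^ t)ᴴ * S * X ^ t)).trace = f t := by
    simp only [trace_smul, RCLike.smul_re, f, weightedFrobeniusSq]
  have hf₀ (t : ℕ) : 0 ≤ f t :=
    mul_nonneg (pow_nonneg hγ t) (weightedFrobeniusSq_nonneg (posSemidef_of_sub_one hS) _)
  have hmul (s t : ℕ) : f (s + t) ≤ f s * f t := by
    simp only [f, pow_add, mul_mul_mul_comm (γ ^ s)]
    gcongr
    exact weightedFrobeniusSq_mul_le_mul hS _ _
  have hsum : HasSum f (RCLike.re P.trace) := by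
    have htr := hP.map (traceAddMonoidHom n 𝕜) continuous_id.matrix_trace
    exact (RCLike.hasSum_re 𝕜 htr).congr_fun fun t ↦ (htrace t).symm
  simpa only [hsum.tsum_eq, trace_sum, map_sum, htrace] using
    min_one_sub_mul_tsum_le_sum_range hf₀ hmul hsum.summable ε H

end WeightedFrobenius

section Stability

open Filter Asymptotics

lemma exists_pow_isBigO_pow_of_spectralRadius_lt_one {E : Type*} [NormedRing E]
    [NormedAlgebra ℂ E] [CompleteSpace E] {a : E} (ha : spectralRadius ℂ a < 1) :
    ∃ r ∈ Set.Ioo (0 : ℝ) 1, (fun t : ℕ ↦ a ^ t) =O[atTop] fun t ↦ r ^ t := by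
  obtain ⟨r, har, hr⟩ := ENNReal.lt_iff_exists_nnreal_btwn.mp ha
  refine ⟨r, ⟨?_, mod_cast hr⟩, .of_norm_eventuallyLE ?_⟩
  · exact_mod_cast zero_le.trans_lt har
  have hroot :=
    (spectrum.pow_nnnorm_pow_one_div_tendsto_nhds_spectralRadius a).eventually_lt_const har
  filter_upwards [hroot, eventually_gt_atTop 0] with t ht ht₀
  rw [one_div, ENNReal.rpow_inv_lt_iff (by positivity), ENNReal.rpow_natCast] at ht
  exact_mod_cast ht.le

namespace IsStable

variable {n : ℕ} {M : Matrix (Fin n) (Fin n) ℝ}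

open scoped Matrix.Norms.Frobenius in
lemma spectralRadius_lt_one (hM : IsStable M) :
    spectralRadius ℂ (M.map Complex.ofReal) < 1 := by
  rcases subsingleton_or_nontrivial (Matrix (Fin n) (Fin n) ℂ) with _ | _
  · simp
  · exact spectrum.spectralRadius_lt_of_forall_lt (r := 1) _ fun μ hμ ↦ hM μ hμ

open scoped Matrix.Norms.Frobenius in
lemma exists_pow_isBigO_pow (hM : IsStable M) :
    ∃ r ∈ Set.Ioo (0 : ℝ) 1, (fun t : ℕ ↦ M ^ t) =O[atTop] fun t ↦ r ^ t := by
  obtain ⟨r, hr, hbound⟩ := exists_pow_isBigO_pow_of_spectralRadius_lt_one hM.spectralRadius_lt_one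
  have hnorm (t : ℕ) : ‖M.map Complex.ofReal ^ t‖ = ‖M ^ t‖ := by
    rw [← frobenius_norm_map_eq (M ^ t) Complex.ofReal Complex.norm_real]
    exact congrArg norm (Matrix.map_pow M Complex.ofRealHom t).symm
  exact ⟨r, hr, (IsBigO.of_norm_le fun t ↦ (hnorm t).ge).trans hbound.norm_left⟩

open scoped Matrix.Norms.Frobenius in
lemma summable_transpose_pow_mul_mul_pow (hM : IsStable M) (S : Matrix (Fin n) (Fin n) ℝ) :
    Summable fun t : ℕ ↦ (M ^ t)ᵀ * S * M ^ t := by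
  obtain ⟨r, ⟨hr₀, hr₁⟩, hbound⟩ := hM.exists_pow_isBigO_pow
  have hboundT : (fun t : ℕ ↦ (M ^ t)ᵀ) =O[atTop] fun t ↦ r ^ t :=
    (IsBigO.of_norm_le fun t ↦ (frobenius_norm_transpose (M ^ t)).le).trans hbound.norm_left
  have hS : (fun _ : ℕ ↦ S) =O[atTop] fun _ ↦ (1 : ℝ) := isBigO_const_const S one_ne_zero _
  have hr : Summable fun t : ℕ ↦ r ^ t * 1 * r ^ t := by
    have hr₂ : r * r < 1 := mul_lt_one_of_nonneg_of_lt_one_left hr₀.le hr₁ hr₁.le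
    simpa only [mul_one, ← mul_pow] using summable_geometric_of_lt_one (by positivity) hr₂
  exact summable_of_isBigO_nat hr ((hboundT.mul hS).mul hbound)

end IsStable

lemma transpose_sqrt_smul_pow_mul_mul {n : Type*} [Fintype n] [DecidableEq n] {γ : ℝ} (hγ : 0 ≤ γ)
    (X S : Matrix n n ℝ) (t : ℕ) :
    ((√γ • X) ^ t)ᵀ * S * (√γ • X) ^ t = γ ^ t • ((X ^ t)ᵀ * S * X ^ t) := by
  simp [smul_pow, smul_smul, ← mul_pow, Real.mul_self_sqrt hγ]

lemma hasSum_lyapP {d m : ℕ} {A : Matrix (Fin d) (Fin d) ℝ} {B : Matrix (Fin d) (Fin m) ℝ}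
    {K : Matrix (Fin m) (Fin d) ℝ} {γ : ℝ} (hγ : 0 ≤ γ) (hstab : IsStable (√γ • (A + B * K)))
    (Q : Matrix (Fin d) (Fin d) ℝ) (R : Matrix (Fin m) (Fin m) ℝ) :
    HasSum (fun t : ℕ ↦ γ ^ t • (((A + B * K) ^ t)ᵀ * (Q + Kᵀ * R * K) * (A + B * K) ^ t))
      (lyapP A B Q R K γ) := by
  have hsum := hstab.summable_transpose_pow_mul_mul_pow (Q + Kᵀ * R * K)
  simp only [transpose_sqrt_smul_pow_mul_mul hγ] at hsum
  exact hsum.hasSum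

end Stability

/-- Finite-horizon lower bound: with `Q + KᵀRK ⪰ I` and `√γ(A+BK)` stable with value
matrix `P`, for any `c ≥ 1` and horizon `H ≥ 4c`, the finite-horizon value matrix `P_H`
satisfies `tr(P_H) ≥ min(tr(P)/2, c)`. -/
theorem finite_horizon_trace_lower_bound {d m : ℕ}
    (A : Matrix (Fin d) (Fin d) ℝ) (B : Matrix (Fin d) (Fin m) ℝ)
    (Q : Matrix (Fin d) (Fin d) ℝ) (R : Matrix (Fin m) (Fin m) ℝ)
    (K : Matrix (Fin m) (Fin d) ℝ)
    (hQK : (Q + Kᵀ * R * K - 1).PosSemidef)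
    (γ : ℝ) (hγ : γ ∈ Set.Ioc (0 : ℝ) 1)
    (hstab : IsStable (Real.sqrt γ • (A + B * K)))
    (c : ℝ) (hc : 1 ≤ c) (H : ℕ) (hH : 4 * c ≤ (H : ℝ)) :
    min ((lyapP A B Q R K γ).trace / 2) c
      ≤ (∑ t ∈ Finset.range H,
          γ ^ t • (((A + B * K) ^ t)ᵀ * (Q + Kᵀ * R * K) * (A + B * K) ^ t)).trace := by
  have hP := hasSum_lyapP hγ.1.le hstab Q R
  simp only [← conjTranspose_eq_transpose_of_trivial (_ ^ _)] at hP ⊢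
  refine le_trans (min_le_min ?_ ?_)
    (finite_horizon_trace_lower_bound_general hQK hγ.1.le hP (1 / 2) H)
  · simp only [RCLike.re_to_real]
    linarith
  · linarith
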